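/- arXiv:0807.3250 — 6 statements merged into one kernel-verified Lean document; each statement's English description precedes it below -/
import Mathlib

section
/- In H_{k⁺ⁱ}, for every α ≥ 0: ξ^α = (−1)^α Σ_{f=0}^{α} ψ(x(₊ᵢk)_{i+1,α−f}) · φ(x̄(k)_{i+1,f}) and ξ^α = (−1)^α Σ_{g=0}^{α} ψ(x̄(₊ᵢk)_{i,α−g}) · φ(x(k)_{i,g}). -/
/-!
Cohomology rings of `n`-step partial flag varieties, following
Khovanov–Lauda, "A diagrammatic approach to categorification of quantum groups III",
Section 5 (Iterated flag varieties).
-/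

open MvPolynomial Finset TensorProduct

noncomputable section

variable (𝕜 : Type) [Field 𝕜]

/-- The generator `x(k)_{j,α}` of `H_k` (with the conventions `x(k)_{j,0} = 1` and
`x(k)_{j,α} = 0` for `j` or `α` out of range), at the level of the ambient polynomial ring. -/
def xp (n : ℕ) (k : ℕ → ℕ) (j α : ℕ) : MvPolynomial (ℕ × ℕ) 𝕜 :=
  if α = 0 then 1 else if 1 ≤ j ∧ j ≤ n ∧ α ≤ k j - k (j - 1) then X (j, α) else 0

/-- The degree `2d` part of the defining relation of `H_k`: the sum over all tuples
`(α_1, …, α_n)` with `α_1 + ⋯ + α_n = d` of the products `x(k)_{1,α_1} ⋯ x(k)_{n,α_n}`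
(out-of-range tuples contribute `0`). -/
def relPoly (n : ℕ) (k : ℕ → ℕ) (d : ℕ) : MvPolynomial (ℕ × ℕ) 𝕜 :=
  ∑ t ∈ Finset.Nat.antidiagonalTuple n d, ∏ j : Fin n, xp 𝕜 n k ((j : ℕ) + 1) (t j)

/-- The pairs `(j, α)` indexing the actual generators of `H_k`. -/
def InRangeK (n : ℕ) (k : ℕ → ℕ) (j α : ℕ) : Prop :=
  1 ≤ j ∧ j ≤ n ∧ 1 ≤ α ∧ α ≤ k j - k (j - 1)

/-- The defining ideal of `H_k`: the relations `relPoly` for every `d ≥ 1`, together with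
all the irrelevant variables of the ambient polynomial ring. -/
def relIdealK (n : ℕ) (k : ℕ → ℕ) : Ideal (MvPolynomial (ℕ × ℕ) 𝕜) :=
  Ideal.span ({p | ∃ d, 1 ≤ d ∧ p = relPoly 𝕜 n k d} ∪
    {p | ∃ j α : ℕ, ¬ InRangeK n k j α ∧ p = X (j, α)})

/-- The cohomology ring `H_k` of the `n`-step flag variety `Fl(k)`. -/
abbrev HK (n : ℕ) (k : ℕ → ℕ) : Type := MvPolynomial (ℕ × ℕ) 𝕜 ⧸ relIdealK 𝕜 n k

/-- The generator `x(k)_{j,α} ∈ H_k` (with conventions). -/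
def xK (n : ℕ) (k : ℕ → ℕ) (j α : ℕ) : HK 𝕜 n k :=
  Ideal.Quotient.mk (relIdealK 𝕜 n k) (xp 𝕜 n k j α)

open Classical in
/-- The dual generator `x̄(k)_{j,α}`: the sum over all tuples `(α_ℓ)_{ℓ ≠ j}` with
`∑_{ℓ ≠ j} α_ℓ = α` of the products `∏_{ℓ ≠ j} x(k)_{ℓ,α_ℓ}`, at the polynomial level. -/
def xbarp (n : ℕ) (k : ℕ → ℕ) (j α : ℕ) : MvPolynomial (ℕ × ℕ) 𝕜 :=
  ∑ t ∈ Finset.Nat.antidiagonalTuple n α,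
    if ∀ ℓ : Fin n, (ℓ : ℕ) + 1 = j → t ℓ = 0 then
      ∏ ℓ : Fin n, xp 𝕜 n k ((ℓ : ℕ) + 1) (t ℓ)
    else 0

/-- The dual generator `x̄(k)_{j,α} ∈ H_k`. -/
def xbarK (n : ℕ) (k : ℕ → ℕ) (j α : ℕ) : HK 𝕜 n k :=
  Ideal.Quotient.mk (relIdealK 𝕜 n k) (xbarp 𝕜 n k j α)

/-- The dual generator with an integer index, with `x̄(k)_{j,α} = 0` for `α < 0`. -/
def xbarKZ (n : ℕ) (k : ℕ → ℕ) (j : ℕ) (α : ℤ) : HK 𝕜 n k :=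
  if 0 ≤ α then xbarK 𝕜 n k j α.toNat else 0

/-- The sequence `₊ᵢk`, obtained from `k` by replacing `k i` with `k i + 1`. -/
def kup (k : ℕ → ℕ) (i : ℕ) : ℕ → ℕ := fun j => if j = i then k i + 1 else k j

/-- The pairs `(j, α)` indexing the actual generators of `H_{k⁺ⁱ}`:
`ξ` is the variable `(0, 1)`, the `x_{j,α}` (`j ≠ i+1`) are the variables `(j, α)`, and
the `x'_{i+1,α}` are the variables `(i+1, α)`. -/
def InRangeKi (n : ℕ) (k : ℕ → ℕ) (i j α : ℕ) : Prop :=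
  (j = 0 ∧ α = 1) ∨
  (1 ≤ j ∧ j ≤ n ∧ j ≠ i + 1 ∧ 1 ≤ α ∧ α ≤ k j - k (j - 1)) ∨
  (j = i + 1 ∧ 1 ≤ α ∧ α ≤ k (i + 1) - k i - 1)

/-- The generator `x_{j,α}` (for `j ≠ i + 1`) of `H_{k⁺ⁱ}`, with conventions,
at the polynomial level. -/
def yp (n : ℕ) (k : ℕ → ℕ) (i j α : ℕ) : MvPolynomial (ℕ × ℕ) 𝕜 :=
  if α = 0 then 1
  else if 1 ≤ j ∧ j ≤ n ∧ j ≠ i + 1 ∧ α ≤ k j - k (j - 1) then X (j, α) else 0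

/-- The generator `x'_{i+1,α}` of `H_{k⁺ⁱ}`, with conventions, at the polynomial level. -/
def y'p (n : ℕ) (k : ℕ → ℕ) (i α : ℕ) : MvPolynomial (ℕ × ℕ) 𝕜 :=
  if α = 0 then 1 else if α ≤ k (i + 1) - k i - 1 then X (i + 1, α) else 0

/-- The coefficient of `t^α` in the `j`-th factor of the generating series
`(1 + ξt) ⬝ (∑_α x'_{i+1,α} t^α) ⬝ ∏_{j ≠ i+1} (∑_α x_{j,α} t^α)` defining `H_{k⁺ⁱ}`;
the factor `j = 0` is `1 + ξ t`. -/
def fp (n : ℕ) (k : ℕ → ℕ) (i j α : ℕ) : MvPolynomial (ℕ × ℕ) 𝕜 :=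
  if j = 0 then (if α = 0 then 1 else if α = 1 then X (0, 1) else 0)
  else if j = i + 1 then y'p 𝕜 n k i α
  else yp 𝕜 n k i j α

/-- The coefficient of `t^d` in
`(1 + ξt) ⬝ (∑_α x'_{i+1,α} t^α) ⬝ ∏_{j ≠ i+1} (∑_α x_{j,α} t^α)`. -/
def relPolyKi (n : ℕ) (k : ℕ → ℕ) (i d : ℕ) : MvPolynomial (ℕ × ℕ) 𝕜 :=
  ∑ t ∈ Finset.Nat.antidiagonalTuple (n + 1) d, ∏ j : Fin (n + 1), fp 𝕜 n k i (j : ℕ) (t j)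

/-- The defining ideal of `H_{k⁺ⁱ}`. -/
def relIdealKi (n : ℕ) (k : ℕ → ℕ) (i : ℕ) : Ideal (MvPolynomial (ℕ × ℕ) 𝕜) :=
  Ideal.span ({p | ∃ d, 1 ≤ d ∧ p = relPolyKi 𝕜 n k i d} ∪
    {p | ∃ j α : ℕ, ¬ InRangeKi n k i j α ∧ p = X (j, α)})

/-- The cohomology ring `H_{k⁺ⁱ}` of the `(n+1)`-step flag variety `Fl(k⁺ⁱ)`. -/
abbrev HKi (n : ℕ) (k : ℕ → ℕ) (i : ℕ) : Type := MvPolynomial (ℕ × ℕ) 𝕜 ⧸ relIdealKi 𝕜 n k i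

/-- The degree `2` generator `ξ ∈ H_{k⁺ⁱ}`. -/
def xiK (n : ℕ) (k : ℕ → ℕ) (i : ℕ) : HKi 𝕜 n k i :=
  Ideal.Quotient.mk (relIdealKi 𝕜 n k i) (X (0, 1))

/-- The generator `x_{j,α} ∈ H_{k⁺ⁱ}` (for `j ≠ i + 1`), with conventions. -/
def yK (n : ℕ) (k : ℕ → ℕ) (i j α : ℕ) : HKi 𝕜 n k i :=
  Ideal.Quotient.mk (relIdealKi 𝕜 n k i) (yp 𝕜 n k i j α)

/-- The generator `x'_{i+1,α} ∈ H_{k⁺ⁱ}`, with conventions. -/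
def y'K (n : ℕ) (k : ℕ → ℕ) (i α : ℕ) : HKi 𝕜 n k i :=
  Ideal.Quotient.mk (relIdealKi 𝕜 n k i) (y'p 𝕜 n k i α)

/-- `φ : H_k → H_{k⁺ⁱ}` is the algebra homomorphism determined by
`φ(x(k)_{j,α}) = x_{j,α}` for `j ≠ i+1` and
`φ(x(k)_{i+1,α}) = ξ·x'_{i+1,α-1} + x'_{i+1,α}`. -/
def IsPhi (n : ℕ) (k : ℕ → ℕ) (i : ℕ) (φ : HK 𝕜 n k →ₐ[𝕜] HKi 𝕜 n k i) : Prop :=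
  (∀ j α : ℕ, j ≠ i + 1 → φ (xK 𝕜 n k j α) = yK 𝕜 n k i j α) ∧
  (∀ α : ℕ, 1 ≤ α → φ (xK 𝕜 n k (i + 1) α) =
    xiK 𝕜 n k i * y'K 𝕜 n k i (α - 1) + y'K 𝕜 n k i α)

/-- `ψ : H_{₊ᵢk} → H_{k⁺ⁱ}` is the algebra homomorphism determined by
`ψ(x(₊ᵢk)_{j,α}) = x_{j,α}` for `j ≠ i, i+1`, `ψ(x(₊ᵢk)_{i+1,α}) = x'_{i+1,α}`, and
`ψ(x(₊ᵢk)_{i,α}) = ξ·x_{i,α-1} + x_{i,α}`. -/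
def IsPsi (n : ℕ) (k : ℕ → ℕ) (i : ℕ) (ψ : HK 𝕜 n (kup k i) →ₐ[𝕜] HKi 𝕜 n k i) : Prop :=
  (∀ j α : ℕ, j ≠ i → j ≠ i + 1 → ψ (xK 𝕜 n (kup k i) j α) = yK 𝕜 n k i j α) ∧
  (∀ α : ℕ, ψ (xK 𝕜 n (kup k i) (i + 1) α) = y'K 𝕜 n k i α) ∧
  (∀ α : ℕ, 1 ≤ α → ψ (xK 𝕜 n (kup k i) i α) =
    xiK 𝕜 n k i * yK 𝕜 n k i i (α - 1) + yK 𝕜 n k i i α)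

/-- The degree `2d` homogeneous component of a quotient of the polynomial ring, where the
variable `(j, α)` has degree `2α`. -/
def qgrade (I : Ideal (MvPolynomial (ℕ × ℕ) 𝕜)) (d : ℕ) :
    Submodule 𝕜 (MvPolynomial (ℕ × ℕ) 𝕜 ⧸ I) :=
  Submodule.map (Ideal.Quotient.mkₐ 𝕜 I).toLinearMap
    (weightedHomogeneousSubmodule 𝕜 (fun v : ℕ × ℕ => 2 * v.2) d)

end

section Statements

variable (𝕜 : Type) [Field 𝕜]

open PowerSeries in
theorem aux_coeff_prod {A : Type} [CommRing A] (n : ℕ) : ∀ (g : Fin n → ℕ → A) (d : ℕ),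
    PowerSeries.coeff d (∏ j : Fin n, PowerSeries.mk (g j)) =
      ∑ t ∈ Finset.Nat.antidiagonalTuple n d, ∏ j : Fin n, g j (t j) := by
  induction n with
  | zero =>
    intro g d
    cases d with
    | zero => simp
    | succ d => simp [PowerSeries.coeff_one]
  | succ n ih =>
    intro g d
    rw [Fin.prod_univ_succ, PowerSeries.coeff_mul]
    simp_rw [ih, PowerSeries.coeff_mk, Finset.mul_sum]
    rw [Finset.sum_sigma']
    refine Finset.sum_bij' (fun p _ => Fin.cons p.1.1 p.2)
      (fun t _ => ⟨(t 0, ∑ j, Fin.tail t j), Fin.tail t⟩) ?_ ?_ ?_ ?_ ?_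
    · rintro ⟨⟨a, b⟩, t⟩ h
      simp only [Finset.mem_sigma, Finset.HasAntidiagonal.mem_antidiagonal,
        Finset.Nat.mem_antidiagonalTuple] at h ⊢
      rw [Fin.sum_univ_succ]
      simp [h.2, h.1]
    · intro t h
      simp only [Finset.mem_sigma, Finset.HasAntidiagonal.mem_antidiagonal,
        Finset.Nat.mem_antidiagonalTuple] at h ⊢
      rw [Fin.sum_univ_succ] at h
      exact ⟨h, trivial⟩
    · rintro ⟨⟨a, b⟩, t⟩ h
      simp only [Finset.mem_sigma, Finset.HasAntidiagonal.mem_antidiagonal,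
        Finset.Nat.mem_antidiagonalTuple] at h
      simp [h.2]
    · intro t h
      simp
    · rintro ⟨⟨a, b⟩, t⟩ h
      simp [Fin.prod_univ_succ]

theorem aux_prod_ite {A : Type} [CommRing A] {n : ℕ} (m : Fin n) (Q : Fin n → A) :
    Q m * ∏ l : Fin n, (if l = m then 1 else Q l) = ∏ l : Fin n, Q l := by
  rw [← Finset.mul_prod_erase Finset.univ Q (Finset.mem_univ m),
    ← Finset.mul_prod_erase Finset.univ _ (Finset.mem_univ m), if_pos rfl, one_mul]
  congr 1
  refine Finset.prod_congr rfl fun l hl => ?_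
  rw [if_neg (Finset.ne_of_mem_erase hl)]

theorem aux_inv {A : Type} [CommRing A] (x : A) (S : PowerSeries A)
    (h : (1 + PowerSeries.C x * PowerSeries.X) * S = 1) (a : ℕ) :
    x ^ a = (-1) ^ a * PowerSeries.coeff a S := by
  induction a with
  | zero =>
    have := congrArg (PowerSeries.coeff 0) h
    simp [add_mul] at this
    simp [this]
  | succ a ih =>
    have := congrArg (PowerSeries.coeff (a + 1)) h
    rw [add_mul, one_mul, mul_assoc, map_add, PowerSeries.coeff_C_mul,
      PowerSeries.coeff_succ_X_mul, PowerSeries.coeff_one, if_neg (Nat.succ_ne_zero a)] at this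
    rw [pow_succ, ih, eq_neg_of_add_eq_zero_left this]
    ring

theorem aux_xbar {A : Type} [CommRing A] (n : ℕ) (k : ℕ → ℕ) (m : Fin n)
    (F : MvPolynomial (ℕ × ℕ) 𝕜 →+* A) (a : ℕ) :
    F (xbarp 𝕜 n k ((m : ℕ) + 1) a) = PowerSeries.coeff a
      (∏ l : Fin n, if l = m then 1
        else PowerSeries.mk fun b => F (xp 𝕜 n k ((l : ℕ) + 1) b)) := by
  have h : ∀ l : Fin n, (if l = m then 1
        else PowerSeries.mk fun b => F (xp 𝕜 n k ((l : ℕ) + 1) b)) =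
      PowerSeries.mk (fun b => if l = m then (if b = 0 then 1 else 0)
        else F (xp 𝕜 n k ((l : ℕ) + 1) b)) := by
    intro l
    ext b
    split_ifs <;> simp_all [PowerSeries.coeff_one]
  simp_rw [h]
  rw [aux_coeff_prod, xbarp, map_sum]
  refine Finset.sum_congr rfl fun t _ => ?_
  split_ifs with hc
  · rw [map_prod]
    refine Finset.prod_congr rfl fun l _ => ?_
    split_ifs with h1 h2
    · simp [h2, xp]
    · exact absurd (hc l (by rw [h1])) h2
    · rfl
  · rw [map_zero]
    symm
    push Not at hc
    obtain ⟨l, hl, hl0⟩ := hc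
    have : l = m := Fin.ext (by omega)
    apply Finset.prod_eq_zero (Finset.mem_univ l)
    simp [this] at hl0 ⊢
    exact fun h => absurd h hl0

theorem aux_rel (n i : ℕ) (k : ℕ → ℕ) :
    (1 + PowerSeries.C (xiK 𝕜 n k i) * PowerSeries.X) *
      (∏ l : Fin n, PowerSeries.mk fun b =>
        Ideal.Quotient.mk (relIdealKi 𝕜 n k i) (fp 𝕜 n k i ((l : ℕ) + 1) b)) = 1 := by
  have h0 : (1 + PowerSeries.C (xiK 𝕜 n k i) * PowerSeries.X) = PowerSeries.mk fun b =>
        Ideal.Quotient.mk (relIdealKi 𝕜 n k i) (fp 𝕜 n k i 0 b) := by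
    ext b
    rcases b with _ | _ | b
    · simp [fp]
    · simp [fp, xiK, PowerSeries.coeff_one]
    · simp [fp, PowerSeries.coeff_one]
  have h1 := Fin.prod_univ_succ (fun j : Fin (n + 1) => PowerSeries.mk fun b =>
        Ideal.Quotient.mk (relIdealKi 𝕜 n k i) (fp 𝕜 n k i (j : ℕ) b))
  simp only [Fin.val_zero, Fin.val_succ] at h1
  rw [h0, ← h1]
  ext d
  rw [aux_coeff_prod, PowerSeries.coeff_one]
  split_ifs with hd
  · subst hd
    rw [Finset.Nat.antidiagonalTuple_zero_right, Finset.sum_singleton]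
    apply Finset.prod_eq_one
    intro j _
    simp [fp, y'p, yp]
  · have : Ideal.Quotient.mk (relIdealKi 𝕜 n k i) (relPolyKi 𝕜 n k i d) = 0 :=
      Ideal.Quotient.eq_zero_iff_mem.mpr
        (Ideal.subset_span (Or.inl ⟨d, Nat.one_le_iff_ne_zero.mpr hd, rfl⟩))
    rw [relPolyKi, map_sum] at this
    simp_rw [map_prod] at this
    exact this

theorem stmt3 (n N i : ℕ) (k : ℕ → ℕ)
    (hn : 1 ≤ n) (hk0 : k 0 = 0) (hkN : k n = N) (hmono : ∀ j, j < n → k j ≤ k (j + 1))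
    (hi1 : 1 ≤ i) (hin : i + 1 ≤ n) (hik : k i < k (i + 1))
    (φ : HK 𝕜 n k →ₐ[𝕜] HKi 𝕜 n k i) (hφ : IsPhi 𝕜 n k i φ)
    (ψ : HK 𝕜 n (kup k i) →ₐ[𝕜] HKi 𝕜 n k i) (hψ : IsPsi 𝕜 n k i ψ) :
    ∀ α : ℕ,
      xiK 𝕜 n k i ^ α = (-1 : HKi 𝕜 n k i) ^ α *
        ∑ f ∈ Finset.range (α + 1),
          ψ (xK 𝕜 n (kup k i) (i + 1) (α - f)) * φ (xbarK 𝕜 n k (i + 1) f) ∧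
      xiK 𝕜 n k i ^ α = (-1 : HKi 𝕜 n k i) ^ α *
        ∑ g ∈ Finset.range (α + 1),
          ψ (xbarK 𝕜 n (kup k i) i (α - g)) * φ (xK 𝕜 n k i g) := by
  intro α
  have key := fun S h => aux_inv (xiK 𝕜 n k i) S h α
  have rel := aux_rel 𝕜 n i k
  obtain ⟨hφ1, hφ2⟩ := hφ
  obtain ⟨hψ1, hψ2, hψ3⟩ := hψ
  constructor
  · rw [key _ rel]
    congr 1
    rw [← aux_prod_ite (⟨i, by omega⟩ : Fin n), mul_comm, PowerSeries.coeff_mul,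
      Finset.Nat.sum_antidiagonal_eq_sum_range_succ_mk]
    refine Finset.sum_congr rfl fun f _ => ?_
    rw [mul_comm, PowerSeries.coeff_mk]
    have hx := aux_xbar 𝕜 n k (⟨i, by omega⟩ : Fin n)
      ((φ : HK 𝕜 n k →+* HKi 𝕜 n k i).comp (Ideal.Quotient.mk (relIdealK 𝕜 n k))) f
    congr 1
    · rw [hψ2]; simp [fp, y'K]
    · refine Eq.trans ?_ hx.symm
      congr 1
      refine Finset.prod_congr rfl fun l _ => ?_
      split_ifs with hl
      · rfl
      · have hl' : (l : ℕ) ≠ i := fun h => hl (Fin.ext h)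
        ext b
        have := hφ1 ((l : ℕ) + 1) b (by omega)
        rw [PowerSeries.coeff_mk, PowerSeries.coeff_mk]
        refine Eq.trans ?_ this.symm
        simp [fp, yK, hl']
  · rw [key _ rel]
    congr 1
    rw [← aux_prod_ite (⟨i - 1, by omega⟩ : Fin n), PowerSeries.coeff_mul,
      Finset.Nat.sum_antidiagonal_eq_sum_range_succ_mk]
    refine Finset.sum_congr rfl fun f _ => ?_
    have hi : i - 1 + 1 = i := by omega
    rw [mul_comm, PowerSeries.coeff_mk]
    have hx := aux_xbar 𝕜 n (kup k i) (⟨i - 1, by omega⟩ : Fin n)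
      ((ψ : HK 𝕜 n (kup k i) →+* HKi 𝕜 n k i).comp
        (Ideal.Quotient.mk (relIdealK 𝕜 n (kup k i)))) (α - f)
    simp only [hi] at hx
    congr 1
    · refine Eq.trans ?_ hx.symm
      congr 1
      refine Finset.prod_congr rfl fun l _ => ?_
      split_ifs with hl
      · rfl
      · have hl' : (l : ℕ) + 1 ≠ i := fun h => hl (Fin.ext (by simp; omega))
        ext b
        rw [PowerSeries.coeff_mk, PowerSeries.coeff_mk]
        by_cases hl2 : (l : ℕ) = i
        · refine Eq.trans (b := ψ (xK 𝕜 n (kup k i) (i + 1) b)) ?_ (by rw [hl2]; rfl)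
          rw [hψ2]
          simp [fp, y'K, hl2]
        · have := hψ1 ((l : ℕ) + 1) b hl' (by omega)
          refine Eq.trans ?_ this.symm
          simp [fp, yK, hl2]
    · rw [hφ1 _ _ (by omega)]
      have : i ≠ 0 := by omega
      simp [fp, yK, hi, this]

end Statements
end

section
/- In H_{k⁺ⁱ}, for every β ≥ 0 the complete symmetric combinations in the i-th and (i+1)-st groups of variables slide across the two inclusions: Σ_{f=0}^{β} φ(x(k)_{i,f} · x(k)_{i+1,β−f}) = Σ_{f=0}^{β} ψ(x(₊ᵢk)_{i,f} · x(₊ᵢk)_{i+1,β−f}). -/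
/-!
Cohomology rings of `n`-step partial flag varieties, following
Khovanov–Lauda, "A diagrammatic approach to categorification of quantum groups III",
Section 5 (Iterated flag varieties).
-/

open MvPolynomial Finset TensorProduct

section Statements

variable (𝕜 : Type) [Field 𝕜]

theorem slide_aux {R : Type} [CommRing R] (a b A B : ℕ → R) (ξ : R)
    (hA0 : A 0 = a 0) (hB0 : B 0 = b 0)
    (hA : ∀ m, A (m + 1) = ξ * a m + a (m + 1))
    (hB : ∀ m, B (m + 1) = ξ * b m + b (m + 1)) (β : ℕ) :
    ∑ f ∈ Finset.range (β + 1), a f * B (β - f) =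
    ∑ f ∈ Finset.range (β + 1), A f * b (β - f) := by
  have h1 : ∑ f ∈ Finset.range (β + 1), a f * B (β - f) =
      ∑ f ∈ Finset.range β, ξ * (a f * b (β - (f + 1))) +
      ∑ f ∈ Finset.range (β + 1), a f * b (β - f) := by
    rw [Finset.sum_range_succ, Finset.sum_range_succ (fun f => a f * b (β - f)), ← add_assoc,
      ← Finset.sum_add_distrib]
    simp only [Nat.sub_self, hB0]
    congr 1
    refine Finset.sum_congr rfl fun f hf => ?_
    have hf' := Finset.mem_range.mp hf
    obtain ⟨m, hm⟩ : ∃ m, β - f = m + 1 := ⟨β - f - 1, by omega⟩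
    have hm' : β - (f + 1) = m := by omega
    rw [hm, hm', hB]
    ring
  have h2 : ∑ f ∈ Finset.range (β + 1), A f * b (β - f) =
      ∑ f ∈ Finset.range β, ξ * (a f * b (β - (f + 1))) +
      ∑ f ∈ Finset.range (β + 1), a f * b (β - f) := by
    rw [Finset.sum_range_succ', Finset.sum_range_succ' (fun f => a f * b (β - f)), ← add_assoc,
      ← Finset.sum_add_distrib, hA0]
    congr 1
    refine Finset.sum_congr rfl fun f _ => ?_
    rw [hA]
    ring
  rw [h1, h2]

theorem stmt4 (n N i : ℕ) (k : ℕ → ℕ)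
    (hn : 1 ≤ n) (hk0 : k 0 = 0) (hkN : k n = N) (hmono : ∀ j, j < n → k j ≤ k (j + 1))
    (hi1 : 1 ≤ i) (hin : i + 1 ≤ n) (hik : k i < k (i + 1))
    (φ : HK 𝕜 n k →ₐ[𝕜] HKi 𝕜 n k i) (hφ : IsPhi 𝕜 n k i φ)
    (ψ : HK 𝕜 n (kup k i) →ₐ[𝕜] HKi 𝕜 n k i) (hψ : IsPsi 𝕜 n k i ψ) :
    ∀ β : ℕ,
      ∑ f ∈ Finset.range (β + 1), φ (xK 𝕜 n k i f * xK 𝕜 n k (i + 1) (β - f)) =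
      ∑ f ∈ Finset.range (β + 1),
        ψ (xK 𝕜 n (kup k i) i f * xK 𝕜 n (kup k i) (i + 1) (β - f)) := by
  intro β
  have hx0 : ∀ (k' : ℕ → ℕ) (j : ℕ), xK 𝕜 n k' j 0 = 1 := fun k' j => by simp [xK, xp]
  have hy0 : yK 𝕜 n k i i 0 = 1 := by simp [yK, yp]
  have hy'0 : y'K 𝕜 n k i 0 = 1 := by simp [y'K, y'p]
  obtain ⟨hφ1, hφ2⟩ := hφ
  obtain ⟨-, hψ2, hψ3⟩ := hψ
  have key := slide_aux (fun f => yK 𝕜 n k i i f) (fun f => y'K 𝕜 n k i f)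
    (fun f => ψ (xK 𝕜 n (kup k i) i f)) (fun f => φ (xK 𝕜 n k (i + 1) f)) (xiK 𝕜 n k i)
    (by simp only [hx0, hy0, map_one]) (by simp only [hx0, hy'0, map_one])
    (fun m => hψ3 (m + 1) (by omega)) (fun m => hφ2 (m + 1) (by omega)) β
  simp only [map_mul, hφ1 i _ (by omega : i ≠ i + 1), hψ2]
  exact key

end Statements
end

section
/- In H_{k⁺ⁱ}, for every α ≥ 0 the dual generators of H_k slide across the inclusion as follows: (a) φ(x̄(k)_{j,α}) = ψ(x̄(₊ᵢk)_{j,α}) for every j ≠ i, i+1; (b) φ(x̄(k)_{i,α}) = ξ·ψ(x̄(₊ᵢk)_{i,α−1}) + ψ(x̄(₊ᵢk)_{i,α}); (c) φ(x̄(k)_{i+1,α}) = Σ_{f=0}^{α} (−1)^f ξ^f · ψ(x̄(₊ᵢk)_{i+1,α−f}). -/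
/-!
Cohomology rings of `n`-step partial flag varieties, following
Khovanov–Lauda, "A diagrammatic approach to categorification of quantum groups III",
Section 5 (Iterated flag varieties).
-/

open MvPolynomial Finset TensorProduct

theorem aux_coeff {R : Type} [CommRing R] (n : ℕ) (g : ℕ → ℕ → R) (hg : ∀ j, g j 0 = 1) (j α : ℕ)
    [∀ t : Fin n → ℕ, Decidable (∀ ℓ : Fin n, (ℓ : ℕ) + 1 = j → t ℓ = 0)] :
    (∑ t ∈ Finset.Nat.antidiagonalTuple n α,
      if ∀ ℓ : Fin n, (ℓ : ℕ) + 1 = j → t ℓ = 0 then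
        ∏ ℓ : Fin n, g ((ℓ : ℕ) + 1) (t ℓ) else 0) =
    PowerSeries.coeff α (∏ ℓ : Fin n,
      if (ℓ : ℕ) + 1 = j then (1 : PowerSeries R) else PowerSeries.mk (g ((ℓ : ℕ) + 1))) := by
  rw [PowerSeries.coeff_prod]
  symm
  refine Finset.sum_bij (fun l _ => (l : Fin n → ℕ)) ?_ ?_ ?_ ?_
  · intro l hl
    rw [Finset.mem_finsuppAntidiag] at hl
    rw [Finset.Nat.mem_antidiagonalTuple]
    exact hl.1
  · intro a _ b _ h
    exact DFunLike.coe_injective h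
  · intro b hb
    rw [Finset.Nat.mem_antidiagonalTuple] at hb
    refine ⟨Finsupp.equivFunOnFinite.symm b, ?_, ?_⟩
    · rw [Finset.mem_finsuppAntidiag]
      exact ⟨by simpa using hb, Finset.subset_univ _⟩
    · simp
  · intro l _
    split_ifs with h
    · refine Finset.prod_congr rfl fun ℓ _ => ?_
      split_ifs with hl
      · rw [h ℓ hl, hg]; simp
      · simp
    · push Not at h
      obtain ⟨ℓ, hl, h0⟩ := h
      refine Finset.prod_eq_zero (Finset.mem_univ ℓ) ?_
      rw [if_pos hl, PowerSeries.coeff_one, if_neg h0]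

theorem aux_xbar_s5 {𝕜 : Type} [Field 𝕜] {R : Type} [CommRing R] [Algebra 𝕜 R] (n : ℕ) (k : ℕ → ℕ)
    (φ : HK 𝕜 n k →ₐ[𝕜] R) (j α : ℕ) :
    φ (xbarK 𝕜 n k j α) = PowerSeries.coeff α (∏ ℓ : Fin n,
      if (ℓ : ℕ) + 1 = j then (1 : PowerSeries R)
      else PowerSeries.mk (fun a => φ (xK 𝕜 n k ((ℓ : ℕ) + 1) a))) := by
  classical
  rw [← aux_coeff n (fun j a => φ (xK 𝕜 n k j a)) (by intro j; simp [xK, xp]) j α]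
  unfold xbarK xbarp
  rw [map_sum, map_sum]
  refine Finset.sum_congr rfl fun t _ => ?_
  split_ifs
  · rw [map_prod, map_prod]; rfl
  · simp

theorem aux_mk {R : Type} [CommRing R] (x : R) (f g : ℕ → R) (h0 : f 0 = g 0)
    (h : ∀ a, 1 ≤ a → f a = x * g (a - 1) + g a) :
    PowerSeries.mk f = (1 + PowerSeries.C x * PowerSeries.X) * PowerSeries.mk g := by
  ext a
  rw [add_mul, one_mul, mul_assoc, map_add, PowerSeries.coeff_C_mul]
  cases a with
  | zero => simp [h0]
  | succ a =>
    rw [PowerSeries.coeff_succ_X_mul]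
    simp [h (a + 1) (by omega), add_comm]

theorem aux_inv_s5 {R : Type} [CommRing R] (x : R) :
    (1 + PowerSeries.C x * PowerSeries.X) * PowerSeries.mk (fun f => (-1 : R) ^ f * x ^ f) = 1 := by
  ext a
  rw [add_mul, one_mul, mul_assoc, map_add, PowerSeries.coeff_C_mul]
  cases a with
  | zero => simp
  | succ a =>
    rw [PowerSeries.coeff_succ_X_mul]
    simp [PowerSeries.coeff_one]
    ring

section Statements

variable (𝕜 : Type) [Field 𝕜]

theorem stmt5 (n N i : ℕ) (k : ℕ → ℕ)
    (hn : 1 ≤ n) (hk0 : k 0 = 0) (hkN : k n = N) (hmono : ∀ j, j < n → k j ≤ k (j + 1))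
    (hi1 : 1 ≤ i) (hin : i + 1 ≤ n) (hik : k i < k (i + 1))
    (φ : HK 𝕜 n k →ₐ[𝕜] HKi 𝕜 n k i) (hφ : IsPhi 𝕜 n k i φ)
    (ψ : HK 𝕜 n (kup k i) →ₐ[𝕜] HKi 𝕜 n k i) (hψ : IsPsi 𝕜 n k i ψ) :
    (∀ j α : ℕ, 1 ≤ j → j ≤ n → j ≠ i → j ≠ i + 1 →
      φ (xbarK 𝕜 n k j α) = ψ (xbarK 𝕜 n (kup k i) j α)) ∧
    (∀ α : ℕ, φ (xbarK 𝕜 n k i α) =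
      xiK 𝕜 n k i * ψ (xbarKZ 𝕜 n (kup k i) i ((α : ℤ) - 1)) +
        ψ (xbarK 𝕜 n (kup k i) i α)) ∧
    (∀ α : ℕ, φ (xbarK 𝕜 n k (i + 1) α) =
      ∑ f ∈ Finset.range (α + 1),
        (-1 : HKi 𝕜 n k i) ^ f * xiK 𝕜 n k i ^ f *
          ψ (xbarK 𝕜 n (kup k i) (i + 1) (α - f))) := by
  classical
  obtain ⟨hφ1, hφ2⟩ := hφ
  obtain ⟨hψ1, hψ2, hψ3⟩ := hψ
  set ξ := xiK 𝕜 n k i with hξ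
  set L : PowerSeries (HKi 𝕜 n k i) := 1 + PowerSeries.C ξ * PowerSeries.X with hL
  set A : ℕ → PowerSeries (HKi 𝕜 n k i) := fun j => PowerSeries.mk (fun a => φ (xK 𝕜 n k j a))
    with hA
  set B : ℕ → PowerSeries (HKi 𝕜 n k i) :=
    fun j => PowerSeries.mk (fun a => ψ (xK 𝕜 n (kup k i) j a)) with hB
  set M : PowerSeries (HKi 𝕜 n k i) :=
    PowerSeries.mk (fun f => (-1 : HKi 𝕜 n k i) ^ f * ξ ^ f) with hM
  have hLM : L * M = 1 := aux_inv_s5 ξ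
  have hx0 : ∀ j, φ (xK 𝕜 n k j 0) = 1 := by intro j; simp [xK, xp]
  have hx0' : ∀ j, ψ (xK 𝕜 n (kup k i) j 0) = 1 := by intro j; simp [xK, xp]
  have hAB : ∀ j, j ≠ i → j ≠ i + 1 → A j = B j := by
    intro j h1 h2
    simp only [hA, hB]
    congr 1
    funext a
    rw [hφ1 j a h2, hψ1 j a h1 h2]
  have hABi1 : A (i + 1) = L * B (i + 1) := by
    refine aux_mk ξ _ _ (by rw [hx0, hx0']) fun a ha => ?_
    rw [hφ2 a ha, hψ2, hψ2]
  have hABi : B i = L * A i := by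
    refine aux_mk ξ _ _ (by rw [hx0, hx0']) fun a ha => ?_
    rw [hψ3 a ha, hφ1 _ _ (by omega), hφ1 _ _ (by omega)]
  have key : ∀ m : ℕ, 1 ≤ m → m ≤ n →
      (∏ ℓ : Fin n, if (ℓ : ℕ) + 1 = m then L else 1) = L := by
    intro m h1 h2
    rw [Finset.prod_eq_single (⟨m - 1, by omega⟩ : Fin n)]
    · rw [if_pos (by simp; omega)]
    · intro b _ hb
      rw [if_neg]
      intro h
      exact hb (Fin.ext (by simp; omega))
    · simp
  set PA : ℕ → PowerSeries (HKi 𝕜 n k i) :=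
    fun j => ∏ ℓ : Fin n, if (ℓ : ℕ) + 1 = j then 1 else A ((ℓ : ℕ) + 1) with hPA
  set PB : ℕ → PowerSeries (HKi 𝕜 n k i) :=
    fun j => ∏ ℓ : Fin n, if (ℓ : ℕ) + 1 = j then 1 else B ((ℓ : ℕ) + 1) with hPB
  have eA : ∀ j α, φ (xbarK 𝕜 n k j α) = PowerSeries.coeff α (PA j) :=
    fun j α => aux_xbar_s5 n k φ j α
  have eB : ∀ j α, ψ (xbarK 𝕜 n (kup k i) j α) = PowerSeries.coeff α (PB j) :=
    fun j α => aux_xbar_s5 n (kup k i) ψ j α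
  have ha : ∀ j, j ≠ i → j ≠ i + 1 → PA j = PB j := by
    intro j h1 h2
    have h : L * PA j = L * PB j := by
      conv_lhs => rw [← key i hi1 (by omega)]
      conv_rhs => rw [← key (i + 1) (by omega) hin]
      simp only [hPA, hPB]
      rw [← Finset.prod_mul_distrib, ← Finset.prod_mul_distrib]
      refine Finset.prod_congr rfl fun ℓ _ => ?_
      generalize (ℓ : ℕ) + 1 = m
      by_cases hm : m = i
      · subst hm
        simp [h1.symm, hABi]
      · by_cases hm' : m = i + 1
        · subst hm'
          simp [h2.symm, hABi1]
        · simp [hm, hm', hAB m hm hm']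
    calc PA j = (L * M) * PA j := by rw [hLM, one_mul]
      _ = M * (L * PA j) := by ring
      _ = (L * M) * PB j := by rw [h]; ring
      _ = PB j := by rw [hLM, one_mul]
  have hb : PA i = L * PB i := by
    conv_rhs => rw [← key (i + 1) (by omega) hin]
    simp only [hPA, hPB]
    rw [← Finset.prod_mul_distrib]
    refine Finset.prod_congr rfl fun ℓ _ => ?_
    generalize (ℓ : ℕ) + 1 = m
    by_cases hm : m = i
    · subst hm
      simp
    · by_cases hm' : m = i + 1
      · subst hm'
        simp [hABi1]
      · simp [hm, hm', hAB m hm hm']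
  have hc : PB (i + 1) = L * PA (i + 1) := by
    conv_rhs => rw [← key i hi1 (by omega)]
    simp only [hPA, hPB]
    rw [← Finset.prod_mul_distrib]
    refine Finset.prod_congr rfl fun ℓ _ => ?_
    generalize (ℓ : ℕ) + 1 = m
    by_cases hm : m = i
    · subst hm
      simp [hABi]
    · by_cases hm' : m = i + 1
      · subst hm'
        simp
      · simp [hm, hm', hAB m hm hm']
  refine ⟨?_, ?_, ?_⟩
  · intro j α _ _ h1 h2
    rw [eA, eB, ha j h1 h2]
  · intro α
    rw [eA, eB, hb, hL, add_mul, one_mul, mul_assoc, map_add, PowerSeries.coeff_C_mul]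
    cases α with
    | zero => simp [xbarKZ]
    | succ a =>
      rw [PowerSeries.coeff_succ_X_mul, add_comm]
      have : xbarKZ 𝕜 n (kup k i) i (((a + 1 : ℕ) : ℤ) - 1) = xbarK 𝕜 n (kup k i) i a := by
        simp [xbarKZ]
      rw [this, eB]
  · intro α
    have h : PA (i + 1) = M * PB (i + 1) := by
      rw [hc, ← mul_assoc, mul_comm M L, hLM, one_mul]
    rw [eA, h, PowerSeries.coeff_mul, Finset.Nat.sum_antidiagonal_eq_sum_range_succ_mk]
    refine Finset.sum_congr rfl fun f _ => ?_
    rw [eB, hM, PowerSeries.coeff_mk]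

end Statements
end

section
/- Set m = k_i − k_{i−1} and let c := Σ_{f=0}^{m} (−1)^{m−f} ξ^f ⊗ φ(x(k)_{i,m−f}) ∈ H_{k⁺ⁱ} ⊗_{H_{₊ᵢk}} H_{k⁺ⁱ}. Then (ξ ⊗ 1)·c = (1 ⊗ ξ)·c; equivalently, Σ_{f=0}^{m} (−1)^{m−f} ξ^{f+1} ⊗ φ(x(k)_{i,m−f}) = Σ_{g=0}^{m} (−1)^{m−g} ξ^g ⊗ ξ·φ(x(k)_{i,m−g}). -/
/-!
Cohomology rings of `n`-step partial flag varieties, following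
Khovanov–Lauda, "A diagrammatic approach to categorification of quantum groups III",
Section 5 (Iterated flag varieties).
-/

open MvPolynomial Finset TensorProduct

section Statements2

variable (𝕜 : Type) [Field 𝕜]

theorem stmt9_aux {R : Type*} [CommRing R] (a b : R) (y z : ℕ → R) (h0 : y 0 = 1) (h0' : z 0 = 1)
    (hE : ∀ j, a * z j + z (j + 1) = b * y j + y (j + 1)) (m : ℕ) :
    (a - b) * (∑ f ∈ Finset.range (m + 1), (-1 : R) ^ (m - f) * (a ^ f * y (m - f))) =
      (-1) ^ m * (y (m + 1) - z (m + 1)) := by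
  induction m with
  | zero =>
    have := hE 0
    simp only [h0, h0'] at this
    simp [h0]
    linear_combination this
  | succ m ih =>
    rw [Finset.sum_range_succ']
    have e : ∑ f ∈ Finset.range (m + 1),
        (-1 : R) ^ (m + 1 - (f + 1)) * (a ^ (f + 1) * y (m + 1 - (f + 1))) =
        a * ∑ f ∈ Finset.range (m + 1), (-1 : R) ^ (m - f) * (a ^ f * y (m - f)) := by
      rw [Finset.mul_sum]
      refine Finset.sum_congr rfl fun f _ => ?_
      rw [Nat.add_sub_add_right]
      ring
    rw [e]
    have := hE (m + 1)
    simp only [Nat.sub_zero, pow_zero, pow_succ]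
    linear_combination a * ih - (-1) ^ m * this

theorem stmt9_aux2 {A B : Type*} [CommRing A] [CommRing B] [Algebra A B] (ξ : B) (y : ℕ → B)
    (h0 : y 0 = 1) (m : ℕ) (hm : y (m + 1) = 0)
    (hE : ∀ j, ∃ r : A, algebraMap A B r = ξ * y j + y (j + 1)) :
    (ξ ⊗ₜ[A] (1 : B)) * (∑ f ∈ Finset.range (m + 1),
        (-1 : B ⊗[A] B) ^ (m - f) * ((ξ ^ f) ⊗ₜ[A] y (m - f))) =
    ((1 : B) ⊗ₜ[A] ξ) * (∑ f ∈ Finset.range (m + 1),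
        (-1 : B ⊗[A] B) ^ (m - f) * ((ξ ^ f) ⊗ₜ[A] y (m - f))) := by
  have key := stmt9_aux (ξ ⊗ₜ[A] (1 : B)) ((1 : B) ⊗ₜ[A] ξ) (fun j => (1 : B) ⊗ₜ[A] y j)
    (fun j => y j ⊗ₜ[A] (1 : B)) (by simp [h0, Algebra.TensorProduct.one_def])
    (by simp [h0, Algebra.TensorProduct.one_def])
    (fun j => by
      obtain ⟨r, hr⟩ := hE j
      simp only [Algebra.TensorProduct.tmul_mul_tmul, mul_one, ← TensorProduct.add_tmul,
        ← TensorProduct.tmul_add, ← hr]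
      rw [Algebra.algebraMap_eq_smul_one, TensorProduct.smul_tmul]) m
  simp only [Algebra.TensorProduct.tmul_mul_tmul, Algebra.TensorProduct.tmul_pow, one_pow,
    one_mul, mul_one, hm, TensorProduct.zero_tmul, TensorProduct.tmul_zero, sub_self,
    mul_zero] at key
  rwa [sub_mul, sub_eq_zero] at key

set_option synthInstance.maxHeartbeats 1000000 in
set_option maxHeartbeats 1000000 in
theorem stmt9 (n N i : ℕ) (k : ℕ → ℕ)
    (hn : 1 ≤ n) (hk0 : k 0 = 0) (hkN : k n = N) (hmono : ∀ j, j < n → k j ≤ k (j + 1))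
    (hi1 : 1 ≤ i) (hin : i + 1 ≤ n) (hik : k i < k (i + 1))
    (φ : HK 𝕜 n k →ₐ[𝕜] HKi 𝕜 n k i) (hφ : IsPhi 𝕜 n k i φ)
    (ψ : HK 𝕜 n (kup k i) →ₐ[𝕜] HKi 𝕜 n k i) (hψ : IsPsi 𝕜 n k i ψ) :
    letI : Algebra (HK 𝕜 n (kup k i)) (HKi 𝕜 n k i) := ψ.toRingHom.toAlgebra
    (xiK 𝕜 n k i ⊗ₜ[HK 𝕜 n (kup k i)] (1 : HKi 𝕜 n k i)) *
      (∑ f ∈ Finset.range (k i - k (i - 1) + 1),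
        (-1 : TensorProduct (HK 𝕜 n (kup k i)) (HKi 𝕜 n k i) (HKi 𝕜 n k i)) ^
            (k i - k (i - 1) - f) *
          ((xiK 𝕜 n k i ^ f) ⊗ₜ[HK 𝕜 n (kup k i)] φ (xK 𝕜 n k i (k i - k (i - 1) - f)))) =
    ((1 : HKi 𝕜 n k i) ⊗ₜ[HK 𝕜 n (kup k i)] xiK 𝕜 n k i) *
      (∑ f ∈ Finset.range (k i - k (i - 1) + 1),
        (-1 : TensorProduct (HK 𝕜 n (kup k i)) (HKi 𝕜 n k i) (HKi 𝕜 n k i)) ^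
            (k i - k (i - 1) - f) *
          ((xiK 𝕜 n k i ^ f) ⊗ₜ[HK 𝕜 n (kup k i)] φ (xK 𝕜 n k i (k i - k (i - 1) - f)))) := by
  letI : Algebra (HK 𝕜 n (kup k i)) (HKi 𝕜 n k i) := ψ.toRingHom.toAlgebra
  have h1 : ∀ α, φ (xK 𝕜 n k i α) = yK 𝕜 n k i i α := fun α => hφ.1 i α (by omega)
  simp only [h1]
  exact stmt9_aux2 (A := HK 𝕜 n (kup k i)) (xiK 𝕜 n k i) (fun j => yK 𝕜 n k i i j)
    (by simp [yK, yp]) _ (by simp [yK, yp])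
    (fun j => ⟨xK 𝕜 n (kup k i) i (j + 1), hψ.2.2 (j + 1) (by omega)⟩)


end Statements2
end

section
/- Set m' = k_{i+1} − k_i − 1 and let c' := Σ_{g=0}^{m'} (−1)^{m'−g} ξ^g ⊗ ψ(x(₊ᵢk)_{i+1,m'−g}) ∈ H_{k⁺ⁱ} ⊗_{H_k} H_{k⁺ⁱ}. Then (ξ ⊗ 1)·c' = (1 ⊗ ξ)·c'; equivalently, Σ_{f=0}^{m'} (−1)^{m'−f} ξ^{f+1} ⊗ ψ(x(₊ᵢk)_{i+1,m'−f}) = Σ_{g=0}^{m'} (−1)^{m'−g} ξ^g ⊗ ξ·ψ(x(₊ᵢk)_{i+1,m'−g}). -/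
/-!
Cohomology rings of `n`-step partial flag varieties, following
Khovanov–Lauda, "A diagrammatic approach to categorification of quantum groups III",
Section 5 (Iterated flag varieties).
-/

open MvPolynomial Finset TensorProduct

section Statements2

variable (𝕜 : Type) [Field 𝕜]

lemma aux_key {A : Type*} [CommRing A] (a b : A) (v e : ℕ → A) (h0 : v 0 = 1)
    (he : ∀ α, e α = b * v α + v (α + 1)) (m : ℕ) :
    ∑ g ∈ Finset.range (m + 1), (-1 : A) ^ (m - g) * (a ^ g * e (m - g)) =
      a ^ (m + 1) - (a - b) * (∑ g ∈ Finset.range (m + 1), (-1 : A) ^ (m - g) * (a ^ g * v (m - g)))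
        + (-1) ^ m * v (m + 1) := by
  have hrec : ∀ (w : ℕ → A) (m : ℕ),
      ∑ g ∈ Finset.range (m + 1 + 1), (-1 : A) ^ (m + 1 - g) * (a ^ g * w (m + 1 - g)) =
      a * (∑ g ∈ Finset.range (m + 1), (-1 : A) ^ (m - g) * (a ^ g * w (m - g)))
        + (-1) ^ (m + 1) * w (m + 1) := by
    intro w m
    rw [Finset.sum_range_succ', Finset.mul_sum]
    congr 1
    · refine Finset.sum_congr rfl fun g _ => ?_
      rw [Nat.add_sub_add_right]
      ring
    · simp
  induction m with
  | zero => simp [he, h0]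
  | succ m ih =>
    rw [hrec, hrec, ih, he]
    ring

lemma aux_main {A : Type*} [CommRing A] (a b : A) (u v : ℕ → A) (hu0 : u 0 = 1) (hv0 : v 0 = 1)
    (m : ℕ) (hu : u (m + 1) = 0) (hv : v (m + 1) = 0)
    (he : ∀ α, a * u α + u (α + 1) = b * v α + v (α + 1)) :
    a * (∑ g ∈ Finset.range (m + 1), (-1 : A) ^ (m - g) * (a ^ g * v (m - g))) =
    b * (∑ g ∈ Finset.range (m + 1), (-1 : A) ^ (m - g) * (a ^ g * v (m - g))) := by
  have h1 := aux_key a b v (fun α => a * u α + u (α + 1)) hv0 he m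
  have h2 := aux_key a a u (fun α => a * u α + u (α + 1)) hu0 (fun _ => rfl) m
  rw [h2, hu, hv] at h1
  linear_combination h1

lemma aux_tmul {R A : Type*} [CommRing R] [CommRing A] [Algebra R A] (r : R) :
    algebraMap R A r ⊗ₜ[R] (1 : A) = (1 : A) ⊗ₜ[R] algebraMap R A r := by
  rw [Algebra.algebraMap_eq_smul_one, TensorProduct.smul_tmul]

set_option synthInstance.maxHeartbeats 1000000 in
set_option maxHeartbeats 1000000 in
theorem stmt10 (n N i : ℕ) (k : ℕ → ℕ)
    (hn : 1 ≤ n) (hk0 : k 0 = 0) (hkN : k n = N) (hmono : ∀ j, j < n → k j ≤ k (j + 1))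
    (hi1 : 1 ≤ i) (hin : i + 1 ≤ n) (hik : k i < k (i + 1))
    (φ : HK 𝕜 n k →ₐ[𝕜] HKi 𝕜 n k i) (hφ : IsPhi 𝕜 n k i φ)
    (ψ : HK 𝕜 n (kup k i) →ₐ[𝕜] HKi 𝕜 n k i) (hψ : IsPsi 𝕜 n k i ψ) :
    letI : Algebra (HK 𝕜 n k) (HKi 𝕜 n k i) := φ.toRingHom.toAlgebra
    (xiK 𝕜 n k i ⊗ₜ[HK 𝕜 n k] (1 : HKi 𝕜 n k i)) *
      (∑ g ∈ Finset.range (k (i + 1) - k i - 1 + 1),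
        (-1 : TensorProduct (HK 𝕜 n k) (HKi 𝕜 n k i) (HKi 𝕜 n k i)) ^
            (k (i + 1) - k i - 1 - g) *
          ((xiK 𝕜 n k i ^ g) ⊗ₜ[HK 𝕜 n k]
            ψ (xK 𝕜 n (kup k i) (i + 1) (k (i + 1) - k i - 1 - g)))) =
    ((1 : HKi 𝕜 n k i) ⊗ₜ[HK 𝕜 n k] xiK 𝕜 n k i) *
      (∑ g ∈ Finset.range (k (i + 1) - k i - 1 + 1),
        (-1 : TensorProduct (HK 𝕜 n k) (HKi 𝕜 n k i) (HKi 𝕜 n k i)) ^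
            (k (i + 1) - k i - 1 - g) *
          ((xiK 𝕜 n k i ^ g) ⊗ₜ[HK 𝕜 n k]
            ψ (xK 𝕜 n (kup k i) (i + 1) (k (i + 1) - k i - 1 - g)))) := by
  letI : Algebra (HK 𝕜 n k) (HKi 𝕜 n k i) := φ.toRingHom.toAlgebra
  have hy0 : y'K 𝕜 n k i 0 = 1 := by simp [y'K, y'p]
  have hym : y'K 𝕜 n k i (k (i + 1) - k i - 1 + 1) = 0 := by simp [y'K, y'p]
  have key := aux_main (A := TensorProduct (HK 𝕜 n k) (HKi 𝕜 n k i) (HKi 𝕜 n k i))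
    (xiK 𝕜 n k i ⊗ₜ[HK 𝕜 n k] (1 : HKi 𝕜 n k i))
    ((1 : HKi 𝕜 n k i) ⊗ₜ[HK 𝕜 n k] xiK 𝕜 n k i)
    (fun α => y'K 𝕜 n k i α ⊗ₜ[HK 𝕜 n k] (1 : HKi 𝕜 n k i))
    (fun α => (1 : HKi 𝕜 n k i) ⊗ₜ[HK 𝕜 n k] y'K 𝕜 n k i α)
    (by simp only [hy0]; rfl) (by simp only [hy0]; rfl) (k (i + 1) - k i - 1)
    (by simp only [hym, TensorProduct.zero_tmul]) (by simp only [hym, TensorProduct.tmul_zero])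
    (by
      intro α
      have h := hφ.2 (α + 1) (by omega)
      rw [Nat.add_sub_cancel] at h
      have h' : algebraMap (HK 𝕜 n k) (HKi 𝕜 n k i) (xK 𝕜 n k (i + 1) (α + 1)) =
        xiK 𝕜 n k i * y'K 𝕜 n k i α + y'K 𝕜 n k i (α + 1) := h
      simp only [Algebra.TensorProduct.tmul_mul_tmul, mul_one]
      rw [← TensorProduct.add_tmul, ← TensorProduct.tmul_add, ← h']
      exact aux_tmul _)
  simp only [Algebra.TensorProduct.tmul_pow, Algebra.TensorProduct.tmul_mul_tmul, one_pow,
    one_mul, mul_one] at key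
  simp only [hψ.2.1]
  exact key

end Statements2
end

section
/- Set m = k_i − k_{i−1} and let c := Σ_{f=0}^{m} (−1)^{m−f} ξ^f ⊗ φ(x(k)_{i,m−f}) ∈ H_{k⁺ⁱ} ⊗_{H_{₊ᵢk}} H_{k⁺ⁱ}. Then for every z ∈ H_k one has (φ(z) ⊗ 1)·c = (1 ⊗ φ(z))·c; consequently the 𝕜-linear map H_k → H_{k⁺ⁱ} ⊗_{H_{₊ᵢk}} H_{k⁺ⁱ} sending z to (φ(z) ⊗ 1)·c is a homomorphism of (H_k, H_k)-bimodules (where H_k acts on the left through φ on the left tensor factor and on the right through φ on the right tensor factor). -/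
/-!
Cohomology rings of `n`-step partial flag varieties, following
Khovanov–Lauda, "A diagrammatic approach to categorification of quantum groups III",
Section 5 (Iterated flag varieties).
-/

open MvPolynomial Finset TensorProduct

/-- Telescoping identity in a commutative ring. -/
theorem aux_tele {T : Type*} [CommRing T] (a b : T) (y w : ℕ → T) (hy0 : y 0 = 1) (hw0 : w 0 = 1)
    (h : ∀ α, a * y α + y (α + 1) = b * w α + w (α + 1)) (p : ℕ) :
    (a - b) * (∑ f ∈ Finset.range (p + 1), (-1) ^ (p - f) * (a ^ f * w (p - f))) =
      (-1) ^ p * (w (p + 1) - y (p + 1)) := by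
  induction p with
  | zero =>
    have := h 0
    simp only [hy0, hw0] at this
    simp [hw0]
    linear_combination this
  | succ p ih =>
    rw [Finset.sum_range_succ']
    have e : ∑ f ∈ Finset.range (p + 1), (-1) ^ (p + 1 - (f + 1)) * (a ^ (f + 1) *
        w (p + 1 - (f + 1))) =
        a * ∑ f ∈ Finset.range (p + 1), (-1) ^ (p - f) * (a ^ f * w (p - f)) := by
      rw [Finset.mul_sum]
      refine Finset.sum_congr rfl fun f _ => ?_
      rw [Nat.add_sub_add_right]
      ring
    rw [e]
    have h1 := h (p + 1)
    simp only [Nat.sub_zero, pow_zero, one_mul]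
    linear_combination a * ih + (-1) ^ (p + 1) * h1

theorem aux_main_s11 (𝕜 : Type) [Field 𝕜] (n i : ℕ) (k : ℕ → ℕ)
    (φ : HK 𝕜 n k →ₐ[𝕜] HKi 𝕜 n k i) (hφ : IsPhi 𝕜 n k i φ)
    (ψ : HK 𝕜 n (kup k i) →ₐ[𝕜] HKi 𝕜 n k i) (hψ : IsPsi 𝕜 n k i ψ)
    {T : Type} [CommRing T] (l r : HKi 𝕜 n k i →+* T) (hlr : ∀ z, l (ψ z) = r (ψ z))
    (z : HK 𝕜 n k) (c : T)
    (hc : c = ∑ f ∈ Finset.range (k i - k (i - 1) + 1), (-1 : T) ^ (k i - k (i - 1) - f) *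
      (l (xiK 𝕜 n k i) ^ f * r (φ (xK 𝕜 n k i (k i - k (i - 1) - f))))) :
    l (φ z) * c = r (φ z) * c := by
  have hii : i ≠ i + 1 := by omega
  have hrec : ∀ α, l (xiK 𝕜 n k i) * l (yK 𝕜 n k i i α) + l (yK 𝕜 n k i i (α + 1)) =
      r (xiK 𝕜 n k i) * r (yK 𝕜 n k i i α) + r (yK 𝕜 n k i i (α + 1)) := by
    intro α
    have := hlr (xK 𝕜 n (kup k i) i (α + 1))
    rw [hψ.2.2 (α + 1) (by omega)] at this
    simpa using this
  have hy0 : yK 𝕜 n k i i 0 = 1 := by simp [yK, yp]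
  have hym : yK 𝕜 n k i i (k i - k (i - 1) + 1) = 0 := by
    have : yp 𝕜 n k i i (k i - k (i - 1) + 1) = 0 := by
      unfold yp
      rw [if_neg (by omega), if_neg (by omega)]
    rw [yK, this, map_zero]
  have hab : (l (xiK 𝕜 n k i) - r (xiK 𝕜 n k i)) * c = 0 := by
    have := aux_tele (l (xiK 𝕜 n k i)) (r (xiK 𝕜 n k i)) (fun α => l (yK 𝕜 n k i i α))
      (fun α => r (yK 𝕜 n k i i α)) (by simp [hy0]) (by simp [hy0]) hrec (k i - k (i - 1))
    simp only [hym, map_zero, sub_zero, mul_zero] at this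
    rw [hc]
    simp only [hφ.1 i _ hii]
    exact this
  have hyc : ∀ α, l (yK 𝕜 n k i i α) * c = r (yK 𝕜 n k i i α) * c := by
    intro α
    induction α with
    | zero => simp [hy0]
    | succ α ih =>
      linear_combination c * hrec α - r (xiK 𝕜 n k i) * ih - l (yK 𝕜 n k i i α) * hab
  have hx : ∀ j α, l (φ (xK 𝕜 n k j α)) * c = r (φ (xK 𝕜 n k j α)) * c := by
    intro j α
    rcases Nat.eq_zero_or_pos α with rfl | hα
    · have : xK 𝕜 n k j 0 = 1 := by simp [xK, xp]
      simp [this]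
    by_cases h1 : j = i + 1
    · subst h1
      have e := fun α => hlr (xK 𝕜 n (kup k i) (i + 1) α)
      simp only [hψ.2.1] at e
      rw [hφ.2 α hα]
      simp only [map_add, map_mul, e]
      linear_combination r (y'K 𝕜 n k i (α - 1)) * hab
    · rw [hφ.1 j α h1]
      by_cases h2 : j = i
      · subst h2; exact hyc α
      · rw [← hψ.1 j α h2 h1, hlr]
  obtain ⟨p, rfl⟩ := Ideal.Quotient.mk_surjective z
  induction p using MvPolynomial.induction_on with
  | C s =>
    have e : Ideal.Quotient.mk (relIdealK 𝕜 n k) (C s) = algebraMap 𝕜 (HK 𝕜 n k) s := rfl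
    rw [e, AlgHom.commutes, ← AlgHom.commutes ψ, hlr]
  | add p q hp hq =>
    simp only [map_add, add_mul, hp, hq]
  | mul_X p v hp =>
    have hv : l (φ (Ideal.Quotient.mk (relIdealK 𝕜 n k) (X v))) * c =
        r (φ (Ideal.Quotient.mk (relIdealK 𝕜 n k) (X v))) * c := by
      obtain ⟨j, α⟩ := v
      by_cases hR : InRangeK n k j α
      · have : Ideal.Quotient.mk (relIdealK 𝕜 n k) (X (j, α)) = xK 𝕜 n k j α := by
          obtain ⟨h1, h2, h3, h4⟩ := hR
          rw [xK, xp, if_neg (by omega), if_pos ⟨h1, h2, h4⟩]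
        rw [this]; exact hx j α
      · have : Ideal.Quotient.mk (relIdealK 𝕜 n k) (X (j, α)) = 0 :=
          Ideal.Quotient.eq_zero_iff_mem.2 (Ideal.subset_span (Or.inr ⟨j, α, hR, rfl⟩))
        simp [this]
    simp only [map_mul]
    linear_combination l (φ (Ideal.Quotient.mk (relIdealK 𝕜 n k) p)) * hv +
      r (φ (Ideal.Quotient.mk (relIdealK 𝕜 n k) (X v))) * hp

section Statements2

variable (𝕜 : Type) [Field 𝕜]

set_option synthInstance.maxHeartbeats 1000000 in
set_option maxHeartbeats 1000000 in
theorem stmt11 (n N i : ℕ) (k : ℕ → ℕ)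
    (hn : 1 ≤ n) (hk0 : k 0 = 0) (hkN : k n = N) (hmono : ∀ j, j < n → k j ≤ k (j + 1))
    (hi1 : 1 ≤ i) (hin : i + 1 ≤ n) (hik : k i < k (i + 1))
    (φ : HK 𝕜 n k →ₐ[𝕜] HKi 𝕜 n k i) (hφ : IsPhi 𝕜 n k i φ)
    (ψ : HK 𝕜 n (kup k i) →ₐ[𝕜] HKi 𝕜 n k i) (hψ : IsPsi 𝕜 n k i ψ) :
    letI : Algebra (HK 𝕜 n (kup k i)) (HKi 𝕜 n k i) := ψ.toRingHom.toAlgebra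
    ∀ z : HK 𝕜 n k,
      (φ z ⊗ₜ[HK 𝕜 n (kup k i)] (1 : HKi 𝕜 n k i)) *
        (∑ f ∈ Finset.range (k i - k (i - 1) + 1),
          (-1 : TensorProduct (HK 𝕜 n (kup k i)) (HKi 𝕜 n k i) (HKi 𝕜 n k i)) ^
              (k i - k (i - 1) - f) *
            ((xiK 𝕜 n k i ^ f) ⊗ₜ[HK 𝕜 n (kup k i)] φ (xK 𝕜 n k i (k i - k (i - 1) - f)))) =
      ((1 : HKi 𝕜 n k i) ⊗ₜ[HK 𝕜 n (kup k i)] φ z) *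
        (∑ f ∈ Finset.range (k i - k (i - 1) + 1),
          (-1 : TensorProduct (HK 𝕜 n (kup k i)) (HKi 𝕜 n k i) (HKi 𝕜 n k i)) ^
              (k i - k (i - 1) - f) *
            ((xiK 𝕜 n k i ^ f) ⊗ₜ[HK 𝕜 n (kup k i)] φ (xK 𝕜 n k i (k i - k (i - 1) - f)))) := by
  letI inst : Algebra (HK 𝕜 n (kup k i)) (HKi 𝕜 n k i) := ψ.toRingHom.toAlgebra
  intro z
  have hs : ∀ u v : HKi 𝕜 n k i, u ⊗ₜ[HK 𝕜 n (kup k i)] v =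
      (Algebra.TensorProduct.includeLeftRingHom (R := HK 𝕜 n (kup k i)) (A := HKi 𝕜 n k i)
        (B := HKi 𝕜 n k i)) u *
      (Algebra.TensorProduct.includeRight (R := HK 𝕜 n (kup k i)) (A := HKi 𝕜 n k i)
        (B := HKi 𝕜 n k i)).toRingHom v := by
    intro u v
    change _ = (u ⊗ₜ[HK 𝕜 n (kup k i)] (1 : HKi 𝕜 n k i)) * ((1 : HKi 𝕜 n k i) ⊗ₜ v)
    rw [Algebra.TensorProduct.tmul_mul_tmul, one_mul, mul_one]
  have key := aux_main_s11 (T := TensorProduct (HK 𝕜 n (kup k i)) (HKi 𝕜 n k i) (HKi 𝕜 n k i))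
    𝕜 n i k φ hφ ψ hψ
    (Algebra.TensorProduct.includeLeftRingHom (R := HK 𝕜 n (kup k i)) (A := HKi 𝕜 n k i)
        (B := HKi 𝕜 n k i))
    (Algebra.TensorProduct.includeRight (R := HK 𝕜 n (kup k i)) (A := HKi 𝕜 n k i)
        (B := HKi 𝕜 n k i)).toRingHom
    (by
      intro w
      change (algebraMap (HK 𝕜 n (kup k i)) (HKi 𝕜 n k i) w) ⊗ₜ[HK 𝕜 n (kup k i)] (1 : HKi 𝕜 n k i)
        = (1 : HKi 𝕜 n k i) ⊗ₜ[HK 𝕜 n (kup k i)] (algebraMap (HK 𝕜 n (kup k i)) (HKi 𝕜 n k i) w)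
      rw [Algebra.algebraMap_eq_smul_one]
      exact TensorProduct.smul_tmul w (1 : HKi 𝕜 n k i) (1 : HKi 𝕜 n k i))
    z _ rfl
  refine Eq.trans ?_ (key.trans ?_)
  · congr 1
    refine Finset.sum_congr rfl fun f _ => ?_
    rw [hs, map_pow]
  · congr 1
    refine Finset.sum_congr rfl fun f _ => ?_
    rw [hs, map_pow]

end Statements2
end
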